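/- arXiv:2006.15356 — 2 statements merged into one kernel-verified Lean document; each statement's English description precedes it below -/
import Mathlib

section
/- Let α ∈ ℂ with Re(α) > 0, let a < b be real, let φ ∈ C¹[a,b] with φ′(t) > 0 for all t ∈ [a,b], and let f ∈ L¹(a,b). Then D_{a+}^{α,φ} I_{a+}^{α,φ} f(x) = f(x) holds for almost every x ∈ [a,b]. -/
open MeasureTheory Filter Set Finset Topology

noncomputable section

namespace FracDE

/-- The `φ`-derivative operator `f ↦ (1/φ′) f′`. -/
def phiD (φ : ℝ → ℝ) (f : ℝ → ℂ) : ℝ → ℂ :=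
  fun x => ((deriv φ x : ℝ) : ℂ)⁻¹ * deriv f x

/-- The Riemann–Liouville fractional integral of order `α` with respect to `φ`, based at `a`:
`(I_{a+}^{α,φ} f)(x) = (1/Γ(α)) ∫_a^x φ′(t) (φ(x) − φ(t))^{α−1} f(t) dt`. -/
def RLI (α : ℂ) (a : ℝ) (φ : ℝ → ℝ) (f : ℝ → ℂ) (x : ℝ) : ℂ :=
  (Complex.Gamma α)⁻¹ *
    ∫ t in a..x, ((deriv φ t : ℝ) : ℂ) * (((φ x - φ t : ℝ) : ℂ) ^ (α - 1)) * f t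

/-- `n = ⌊Re α⌋ + 1`. -/
def rlN (α : ℂ) : ℕ := ⌊α.re⌋.toNat + 1

/-- The Riemann–Liouville fractional derivative of order `α` with respect to `φ`:
`(D_{a+}^{α,φ} f)(x) = ((1/φ′(x)) d/dx)^n (I_{a+}^{n−α,φ} f)(x)`, `n = ⌊Re α⌋ + 1`. -/
def RLD (α : ℂ) (a : ℝ) (φ : ℝ → ℝ) (f : ℝ → ℂ) : ℝ → ℂ :=
  (phiD φ)^[rlN α] (RLI ((rlN α : ℂ) - α) a φ f)

open Classical in
/-- The integer `n` used in the modified Caputo-type derivative: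
`n = α` if `α ∈ ℕ`, and `n = ⌊Re α⌋ + 1` otherwise. -/
def capN (α : ℂ) : ℕ := if ∃ n : ℕ, α = n then ⌊α.re⌋.toNat else ⌊α.re⌋.toNat + 1

/-- The Taylor-type polynomial `Σ_{j<n} ((1/φ′) d/dt)^j f (a) / j! · (φ(t) − φ(a))^j`. -/
def phiTaylor (n : ℕ) (a : ℝ) (φ : ℝ → ℝ) (f : ℝ → ℂ) (t : ℝ) : ℂ :=
  ∑ j ∈ Finset.range n, ((phiD φ)^[j] f a / (Nat.factorial j : ℂ)) * ((φ t - φ a : ℝ) : ℂ) ^ j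

/-- The modified Caputo-type fractional derivative with respect to `φ`. -/
def CapD (α : ℂ) (a : ℝ) (φ : ℝ → ℝ) (f : ℝ → ℂ) : ℝ → ℂ :=
  RLD α a φ (fun t => f t - phiTaylor (capN α) a φ f t)

/-- `φ ∈ C¹[a,b]` with `φ′ > 0` on `[a,b]`. -/
structure IsC1Pos (φ : ℝ → ℝ) (a b : ℝ) : Prop where
  deriv_at : ∀ t ∈ Set.Icc a b, HasDerivAt φ (deriv φ t) t
  continuous_deriv : ContinuousOn (deriv φ) (Set.Icc a b)
  deriv_pos : ∀ t ∈ Set.Icc a b, 0 < deriv φ t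

/-- The sup-norm on `[0,T]`. -/
def maxNorm (T : ℝ) (f : ℝ → ℂ) : ℝ := sSup ((fun t => ‖f t‖) '' Set.Icc 0 T)

/-- Membership in the space `C^{n₀−1,β₀}[0,T]`. -/
def MemCspace (T : ℝ) (φ : ℝ → ℝ) (β0 : ℂ) (x : ℝ → ℂ) : Prop :=
  ContDiffOn ℝ (rlN β0 - 1 : ℕ) x (Set.Icc 0 T) ∧
    ContinuousOn (CapD β0 0 φ x) (Set.Icc 0 T)

/-- The norm of the space `C^{n₀−1,β₀}[0,T]`. -/
def normCspace (T : ℝ) (φ : ℝ → ℝ) (β0 : ℂ) (x : ℝ → ℂ) : ℝ :=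
  (∑ k ∈ Finset.range (rlN β0), maxNorm T ((phiD φ)^[k] x)) + maxNorm T (CapD β0 0 φ x)

/-- The ordering assumptions on the orders `β₀, …, β_m`:
`Re β₀ > Re β₁ > … > Re β_m ≥ 0`, and `β_m = 0` whenever `Re β_m = 0`. -/
def BetaChain (m : ℕ) (β : ℕ → ℂ) : Prop :=
  (∀ i < m, (β (i + 1)).re < (β i).re) ∧ 0 ≤ (β m).re ∧ ((β m).re = 0 → β m = 0)

/-- `x` solves `^C D^{β₀,φ} x(t) + Σ_{i=1}^m d_i(t) ^C D^{β_i,φ} x(t) = h(t)` on `[0,T]`. -/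
def SolvesE (T : ℝ) (φ : ℝ → ℝ) (m : ℕ) (β : ℕ → ℂ) (d : ℕ → ℝ → ℂ) (h x : ℝ → ℂ) : Prop :=
  ∀ t ∈ Set.Icc 0 T,
    CapD (β 0) 0 φ x t + ∑ i ∈ Finset.Icc 1 m, d i t * CapD (β i) 0 φ x t = h t

/-- The initial conditions `((1/φ′) d/dt)^k x (0+) = c_k`, `k = 0, …, n₀−1`. -/
def InitCond (φ : ℝ → ℝ) (n0 : ℕ) (c : ℕ → ℂ) (x : ℝ → ℂ) : Prop :=
  ∀ k < n0, Filter.Tendsto ((phiD φ)^[k] x) (nhdsWithin 0 (Set.Ioi 0)) (nhds (c k))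

/-- The growth condition (G): there are `ν > 0` and `0 < C < 1` with
`Σ_{i=1}^m bound_i ‖(I^{β₀−β_i,φ} e^{ν·})(t)‖ ≤ C e^{ν t}` on `[0,T]`. -/
def GrowthCond (T : ℝ) (φ : ℝ → ℝ) (m : ℕ) (β : ℕ → ℂ) (bound : ℕ → ℝ) : Prop :=
  ∃ ν : ℝ, 0 < ν ∧ ∃ C : ℝ, 0 < C ∧ C < 1 ∧ ∀ t ∈ Set.Icc 0 T,
    ∑ i ∈ Finset.Icc 1 m,
      bound i * ‖RLI (β 0 - β i) 0 φ (fun s => (Real.exp (ν * s) : ℂ)) t‖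
      ≤ C * Real.exp (ν * t)

/-- The operator `f ↦ Σ_{i=1}^m d_i(·) I^{β₀−β_i,φ} f`. -/
def opS (φ : ℝ → ℝ) (m : ℕ) (β : ℕ → ℂ) (d : ℕ → ℝ → ℂ) (f : ℝ → ℂ) : ℝ → ℂ :=
  fun t => ∑ i ∈ Finset.Icc 1 m, d i t * RLI (β 0 - β i) 0 φ f t

/-- The successive-approximation sequence `x₀ = I^{β₀,φ} h`,
`x_n = x₀ − I^{β₀,φ} Σ_i d_i ^C D^{β_i,φ} x_{n−1}`. -/
def apxSeq (φ : ℝ → ℝ) (m : ℕ) (β : ℕ → ℂ) (d : ℕ → ℝ → ℂ) (h : ℝ → ℂ) : ℕ → ℝ → ℂ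
  | 0 => RLI (β 0) 0 φ h
  | n + 1 => fun t => RLI (β 0) 0 φ h t -
      RLI (β 0) 0 φ
        (fun s => ∑ i ∈ Finset.Icc 1 m, d i s * CapD (β i) 0 φ (apxSeq φ m β d h n) s) t

/-- `Ψ_j(t) = (φ(t) − φ(0))^j / Γ(j+1)`. -/
def Psi (φ : ℝ → ℝ) (j : ℕ) (t : ℝ) : ℂ :=
  ((φ t - φ 0 : ℝ) : ℂ) ^ j / (Nat.factorial j : ℂ)

/-- The set `K_j = {i : 1 ≤ i ≤ m, Re β_i ≤ j}`. -/
def Kset (m : ℕ) (β : ℕ → ℂ) (j : ℕ) : Set ℕ :=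
  {i : ℕ | 1 ≤ i ∧ i ≤ m ∧ (β i).re ≤ (j : ℝ)}

/-- `ϰ_j = min K_j`. -/
def kappa (m : ℕ) (β : ℕ → ℂ) (j : ℕ) : ℕ := sInf (Kset m β j)

/-- `X` is a canonical set of solutions of the homogeneous equation (E₀). -/
def IsCanonicalSet (T : ℝ) (φ : ℝ → ℝ) (m : ℕ) (β : ℕ → ℂ) (d : ℕ → ℝ → ℂ)
    (X : ℕ → ℝ → ℂ) : Prop :=
  ∀ j < rlN (β 0),
    SolvesE T φ m β d (fun _ => 0) (X j) ∧
    ∀ k < rlN (β 0),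
      Filter.Tendsto ((phiD φ)^[k] (X j)) (nhdsWithin 0 (Set.Ioi 0))
        (nhds (if k = j then 1 else 0))

/-- The multivariate Mittag-Leffler function `E_{(a₁,…,a_n),b}(z₁,…,z_n)`. -/
def mvML (n : ℕ) (a : Fin n → ℂ) (b : ℂ) (z : Fin n → ℂ) : ℂ :=
  ∑' k : ℕ, ∑ l ∈ Finset.Nat.antidiagonalTuple n k,
    (Nat.multinomial Finset.univ l : ℂ) * (∏ i, z i ^ l i) /
      Complex.Gamma (b + ∑ i, a i * (l i : ℂ))

/-- `g ∈ AC^n[a,b]`: the `(n−1)`-st derivative of `g` is absolutely continuous on `[a,b]`. -/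
def ACn (n : ℕ) (a b : ℝ) (g : ℝ → ℂ) : Prop :=
  ContDiffOn ℝ (n - 1 : ℕ) g (Set.Icc a b) ∧
  ∃ g' : ℝ → ℂ, IntervalIntegrable g' volume a b ∧
    ∀ x ∈ Set.Icc a b, iteratedDeriv (n - 1) g x = iteratedDeriv (n - 1) g a + ∫ t in a..x, g' t

end FracDE

/-! Substituting `u = φ t` turns the integrals with respect to `φ` into classical Riemann–Liouville
integrals of `g = f ∘ φ⁻¹`, and `(1/φ′) d/dx` into `d/du`. The classical integrals form a semigroup:
Fubini on the triangle `c < s < t ≤ u` leaves an inner integral which is a Beta integral, and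
`B(α, β) = Γ(α) Γ(β) / Γ(α + β)`. Hence `I^{n-α} I^α f = I^n f`. As `I^k f` is continuous for
`k ≥ 1`, the fundamental theorem of calculus makes the first `n - 1` derivatives turn `I^n f` into
`I^1 f`; the last one recovers `f` almost everywhere by Lebesgue's differentiation theorem. -/

namespace FracDE

section Triangle

variable {E : Type*} [NormedAddCommGroup E] {c u : ℝ} {F : ℝ → ℝ → E}

/-- The triangle `c < s < t ≤ u`, in coordinates `(s, t)`: the domain over which the order of
integration is exchanged. -/
def triangle (c u : ℝ) : Set (ℝ × ℝ) := {p | c < p.1 ∧ p.1 < p.2 ∧ p.2 ≤ u}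

lemma measurableSet_triangle (c u : ℝ) : MeasurableSet (triangle c u) :=
  (measurableSet_lt measurable_const measurable_fst).inter
    ((measurableSet_lt measurable_fst measurable_snd).inter
      (measurableSet_le measurable_snd measurable_const))

lemma indicator_triangle_left {s : ℝ} (hs : c < s) :
    (fun t => (triangle c u).indicator (Function.uncurry F) (s, t)) =
      (Set.Ioc s u).indicator (F s) := by
  ext t
  simp [triangle, indicator_apply, hs]

lemma indicator_triangle_left_of_notMem {s : ℝ} (hs : s ∉ Set.Ioc c u) :
    (fun t => (triangle c u).indicator (Function.uncurry F) (s, t)) = 0 := by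
  ext t
  exact indicator_of_notMem (fun h => hs ⟨h.1, h.2.1.le.trans h.2.2⟩) _

lemma indicator_triangle_right {t : ℝ} (ht : t ≤ u) :
    (fun s => (triangle c u).indicator (Function.uncurry F) (s, t)) =
      (Set.Ioo c t).indicator fun s => F s t := by
  ext s
  simp [triangle, indicator_apply, ht]

lemma indicator_triangle_right_of_notMem {t : ℝ} (ht : t ∉ Set.Ioc c u) :
    (fun s => (triangle c u).indicator (Function.uncurry F) (s, t)) = 0 := by
  ext s
  exact indicator_of_notMem (fun h => ht ⟨h.1.trans h.2.1, h.2.2⟩) _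

lemma integral_indicator_triangle_left [NormedSpace ℝ E] :
    (fun s => ∫ t, (triangle c u).indicator (Function.uncurry F) (s, t)) =
      (Set.Ioc c u).indicator fun s => ∫ t in s..u, F s t := by
  ext s
  by_cases hs : s ∈ Set.Ioc c u
  · rw [indicator_of_mem hs, indicator_triangle_left hs.1, integral_indicator measurableSet_Ioc,
      intervalIntegral.integral_of_le hs.2]
  · rw [indicator_of_notMem hs, indicator_triangle_left_of_notMem hs, integral_zero']

lemma integral_indicator_triangle_right [NormedSpace ℝ E] :
    (fun t => ∫ s, (triangle c u).indicator (Function.uncurry F) (s, t)) =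
      (Set.Ioc c u).indicator fun t => ∫ s in c..t, F s t := by
  ext t
  by_cases ht : t ∈ Set.Ioc c u
  · rw [indicator_of_mem ht, indicator_triangle_right ht.2, integral_indicator measurableSet_Ioo,
      intervalIntegral.integral_of_le ht.1.le, integral_Ioc_eq_integral_Ioo]
  · rw [indicator_of_notMem ht, indicator_triangle_right_of_notMem ht, integral_zero']

lemma integral_integral_swap_triangle [NormedSpace ℝ E] (hcu : c ≤ u)
    (hF : IntegrableOn (Function.uncurry F) (triangle c u)) :
    ∫ t in c..u, ∫ s in c..t, F s t = ∫ s in c..u, ∫ t in s..u, F s t := by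
  rw [intervalIntegral.integral_of_le hcu, intervalIntegral.integral_of_le hcu,
    ← integral_indicator measurableSet_Ioc, ← integral_indicator measurableSet_Ioc,
    ← integral_indicator_triangle_left, ← integral_indicator_triangle_right]
  exact (integral_integral_swap
    (f := fun s t => (triangle c u).indicator (Function.uncurry F) (s, t))
    ((integrable_indicator_iff (measurableSet_triangle c u)).2 hF)).symm

lemma integrableOn_triangle
    (hF : AEStronglyMeasurable (Function.uncurry F) (volume.restrict (triangle c u)))
    (hslice : ∀ᵐ s, s ∈ Set.Ioc c u → IntervalIntegrable (F s) volume s u)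
    (hnorm : IntegrableOn (fun s => ∫ t in s..u, ‖F s t‖) (Set.Ioc c u)) :
    IntegrableOn (Function.uncurry F) (triangle c u) := by
  have hT := measurableSet_triangle c u
  rw [← integrable_indicator_iff hT, Measure.volume_eq_prod,
    integrable_prod_iff ((aestronglyMeasurable_indicator_iff hT).2 hF)]
  constructor
  · filter_upwards [hslice] with s hs
    by_cases hsu : s ∈ Set.Ioc c u
    · rw [indicator_triangle_left hsu.1, integrable_indicator_iff measurableSet_Ioc]
      exact (hs hsu).1
    · rw [indicator_triangle_left_of_notMem hsu]
      exact integrable_zero ℝ E volume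
  · have hnorm_indicator : (fun s => ∫ t, ‖(triangle c u).indicator (Function.uncurry F) (s, t)‖) =
        (Set.Ioc c u).indicator fun s => ∫ t in s..u, ‖F s t‖ := by
      rw [← integral_indicator_triangle_left]
      simp only [norm_indicator_eq_indicator_norm]
      rfl
    rw [hnorm_indicator, integrable_indicator_iff measurableSet_Ioc]
    exact hnorm

end Triangle

section BetaKernel

variable {α β : ℂ} {s u : ℝ}

/-- The kernel `(u - t)^(β-1) (t - s)^(α-1)` produced by composing fractional integrals of orders
`β` and `α`. -/
def betaKernel (α β : ℂ) (s u t : ℝ) : ℂ :=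
  ((u - t : ℝ) : ℂ) ^ (β - 1) * ((t - s : ℝ) : ℂ) ^ (α - 1)

lemma measurable_betaKernel (α β : ℂ) (u : ℝ) :
    Measurable (Function.uncurry fun s t => betaKernel α β s u t) := by
  unfold betaKernel Function.uncurry
  fun_prop

lemma integral_betaKernel (α β : ℂ) (hsu : s < u) :
    ∫ t in s..u, betaKernel α β s u t =
      ((u - s : ℝ) : ℂ) ^ (α + β - 1) * Complex.betaIntegral α β := by
  rw [← Complex.betaIntegral_scaled α β (sub_pos.2 hsu), ← sub_self s,
    ← intervalIntegral.integral_comp_sub_right _ s]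
  refine intervalIntegral.integral_congr fun t _ => ?_
  simp only [betaKernel, Complex.ofReal_sub, sub_sub_sub_cancel_right, mul_comm]

lemma betaIntegral_ne_zero (hα : 0 < α.re) (hβ : 0 < β.re) : Complex.betaIntegral α β ≠ 0 := by
  intro h
  refine mul_ne_zero (Complex.Gamma_ne_zero_of_re_pos hα) (Complex.Gamma_ne_zero_of_re_pos hβ) ?_
  rw [Complex.Gamma_mul_Gamma_eq_betaIntegral hα hβ, h, mul_zero]

lemma intervalIntegrable_betaKernel (hα : 0 < α.re) (hβ : 0 < β.re) (hsu : s < u) :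
    IntervalIntegrable (betaKernel α β s u) volume s u := by
  refine intervalIntegral.intervalIntegrable_of_integral_ne_zero ?_
  rw [integral_betaKernel α β hsu]
  refine mul_ne_zero (fun h => ?_) (betaIntegral_ne_zero hα hβ)
  exact (sub_pos.2 hsu).ne' (Complex.ofReal_eq_zero.1 ((Complex.cpow_eq_zero_iff _ _).1 h).1)

lemma ofReal_norm_betaKernel {t : ℝ} (ht : t ∈ Set.Ioo s u) :
    ((‖betaKernel α β s u t‖ : ℝ) : ℂ) = betaKernel α.re β.re s u t := by
  rw [betaKernel, betaKernel, norm_mul, Complex.norm_cpow_eq_rpow_re_of_pos (sub_pos.2 ht.1),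
    Complex.norm_cpow_eq_rpow_re_of_pos (sub_pos.2 ht.2)]
  push_cast [Complex.ofReal_cpow (sub_pos.2 ht.1).le, Complex.ofReal_cpow (sub_pos.2 ht.2).le]
  simp

lemma integral_norm_betaKernel (hα : 0 < α.re) (hβ : 0 < β.re) (hsu : s < u) :
    ∫ t in s..u, ‖betaKernel α β s u t‖ =
      (u - s) ^ ((α + β).re - 1) * ProbabilityTheory.beta α.re β.re := by
  have hreal : ((∫ t in s..u, ‖betaKernel α β s u t‖ : ℝ) : ℂ) =
      (((u - s) ^ ((α + β).re - 1) : ℝ) : ℂ) * Complex.betaIntegral α.re β.re := by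
    rw [← intervalIntegral.integral_ofReal, Complex.ofReal_cpow (sub_pos.2 hsu).le,
      intervalIntegral.integral_congr_Ioo_of_le hsu.le fun t ht => ofReal_norm_betaKernel ht,
      integral_betaKernel _ _ hsu]
    simp
  rw [ProbabilityTheory.beta_eq_betaIntegralReal _ _ hα hβ, ← Complex.re_ofReal_mul, ← hreal,
    Complex.ofReal_re]

end BetaKernel

section ClassicalRLI

variable {α β : ℂ} {c d u : ℝ} {g : ℝ → ℂ}

/-- The classical Riemann–Liouville integral `(I_{c+}^α g)(u)`, to which `RLI` is conjugate under
the substitution `u = φ x`. -/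
def classicalRLI (α : ℂ) (c : ℝ) (g : ℝ → ℂ) (u : ℝ) : ℂ :=
  (Complex.Gamma α)⁻¹ * ∫ s in c..u, ((u - s : ℝ) : ℂ) ^ (α - 1) * g s

lemma classicalRLI_one (c : ℝ) (g : ℝ → ℂ) (u : ℝ) : classicalRLI 1 c g u = ∫ s in c..u, g s := by
  simp [classicalRLI]

lemma integrableOn_betaKernel_mul (hα : 0 < α.re) (hβ : 0 < β.re) (hαβ : 1 ≤ (α + β).re)
    (hg : IntegrableOn g (Set.Icc c u)) :
    IntegrableOn (Function.uncurry fun s t => betaKernel α β s u t * g s) (triangle c u) := by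
  have hg' : IntegrableOn g (Set.Ioc c u) := hg.mono_set Ioc_subset_Icc_self
  refine integrableOn_triangle ?_ ?_ ?_
  · have hgT : AEStronglyMeasurable (fun p : ℝ × ℝ => g p.1) (volume.restrict (triangle c u)) := by
      have hprod := hg'.aestronglyMeasurable.comp_fst (ν := (volume : Measure ℝ))
      rw [Measure.restrict_prod_eq_prod_univ, ← Measure.volume_eq_prod] at hprod
      have hsub : triangle c u ⊆ Set.Ioc c u ×ˢ Set.univ := fun p hp =>
        ⟨⟨hp.1, hp.2.1.le.trans hp.2.2⟩, mem_univ _⟩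
      exact hprod.mono_set hsub
    exact (measurable_betaKernel α β u).aestronglyMeasurable.mul hgT
  · filter_upwards [Measure.ae_ne volume u] with s hsu hs
    exact (intervalIntegrable_betaKernel hα hβ (hs.2.lt_of_ne hsu)).mul_const (g s)
  · have hpow : ContinuousOn
        (fun s => (u - s) ^ ((α + β).re - 1) * ProbabilityTheory.beta α.re β.re) (Set.Icc c u) :=
      ((continuousOn_const.sub continuousOn_id).rpow_const
        fun s _ => Or.inr (sub_nonneg.2 hαβ)).mul continuousOn_const
    refine ((IntegrableOn.continuousOn_mul hpow hg.norm isCompact_Icc).mono_set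
      Ioc_subset_Icc_self).congr ?_
    filter_upwards [ae_restrict_mem measurableSet_Ioc, ae_restrict_of_ae (Measure.ae_ne volume u)]
      with s hs hsu
    simp only [norm_mul, intervalIntegral.integral_mul_const,
      integral_norm_betaKernel hα hβ (hs.2.lt_of_ne hsu)]

lemma classicalRLI_classicalRLI (hα : 0 < α.re) (hβ : 0 < β.re) (hαβ : 1 ≤ (α + β).re)
    (hcu : c ≤ u) (hg : IntegrableOn g (Set.Icc c u)) :
    classicalRLI β c (classicalRLI α c g) u = classicalRLI (α + β) c g u := by
  have hinner : ∀ t, ((u - t : ℝ) : ℂ) ^ (β - 1) * classicalRLI α c g t =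
      (Complex.Gamma α)⁻¹ * ∫ s in c..t, betaKernel α β s u t * g s := fun t => by
    rw [classicalRLI, mul_left_comm, ← intervalIntegral.integral_const_mul]
    simp only [betaKernel, mul_assoc]
  have houter : ∫ s in c..u, ∫ t in s..u, betaKernel α β s u t * g s =
      Complex.betaIntegral α β * ∫ s in c..u, ((u - s : ℝ) : ℂ) ^ (α + β - 1) * g s := by
    rw [← intervalIntegral.integral_const_mul]
    refine intervalIntegral.integral_congr_Ioo_of_le hcu fun s hs => ?_
    simp only [intervalIntegral.integral_mul_const, integral_betaKernel α β hs.2]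
    ring
  have hΓα := Complex.Gamma_ne_zero_of_re_pos hα
  have hΓβ := Complex.Gamma_ne_zero_of_re_pos hβ
  have hΓαβ := Complex.Gamma_ne_zero_of_re_pos (zero_lt_one.trans_le hαβ)
  rw [classicalRLI, funext hinner, intervalIntegral.integral_const_mul,
    integral_integral_swap_triangle hcu (integrableOn_betaKernel_mul hα hβ hαβ hg), houter,
    classicalRLI, Complex.betaIntegral_eq_Gamma_mul_div α β hα hβ]
  field_simp

lemma classicalRLI_add_one (hα : 0 < α.re) (hcu : c ≤ u) (hg : IntegrableOn g (Set.Icc c u)) :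
    classicalRLI (α + 1) c g u = ∫ t in c..u, classicalRLI α c g t := by
  rw [← classicalRLI_one, classicalRLI_classicalRLI hα _ _ hcu hg] <;> simp [hα.le]

lemma re_natCast_add_one_pos (k : ℕ) : 0 < ((k : ℂ) + 1).re := by
  rw [← Nat.cast_succ, Complex.natCast_re]
  exact mod_cast k.succ_pos

lemma continuousOn_classicalRLI_nat_succ (hg : IntegrableOn g (Set.Icc c d)) (k : ℕ) :
    ContinuousOn (classicalRLI (k + 1) c g) (Set.Icc c d) := by
  rcases lt_or_ge d c with hdc | hcd
  · simp [Set.Icc_eq_empty_of_lt hdc]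
  have hprim {h : ℝ → ℂ} (hh : IntegrableOn h (Set.Icc c d)) :
      ContinuousOn (fun u => ∫ t in c..u, h t) (Set.Icc c d) := by
    rw [← uIcc_of_le hcd] at hh ⊢
    exact intervalIntegral.continuousOn_primitive_interval hh
  induction k with
  | zero => simpa [funext (classicalRLI_one c g)] using hprim hg
  | succ k ih =>
    refine (hprim (ih.integrableOn_compact isCompact_Icc)).congr fun u hu => ?_
    push_cast
    exact classicalRLI_add_one (re_natCast_add_one_pos k) hu.1
      (hg.mono_set (Icc_subset_Icc_right hu.2))

lemma hasDerivAt_classicalRLI_add_one (hα : 0 < α.re) (hg : IntegrableOn g (Set.Icc c d))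
    (hcont : ContinuousOn (classicalRLI α c g) (Set.Icc c d)) (hu : u ∈ Set.Ioo c d) :
    HasDerivAt (classicalRLI (α + 1) c g) (classicalRLI α c g u) u := by
  have hFTC : HasDerivAt (fun v => ∫ t in c..v, classicalRLI α c g t) (classicalRLI α c g u) u := by
    refine intervalIntegral.integral_hasDerivAt_right ?_ ?_ ?_
    · refine (hcont.mono ?_).intervalIntegrable
      rw [uIcc_of_le hu.1.le]
      exact Icc_subset_Icc_right hu.2.le
    · exact (hcont.mono Ioo_subset_Icc_self).stronglyMeasurableAtFilter isOpen_Ioo u hu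
    · exact hcont.continuousAt (Icc_mem_nhds hu.1 hu.2)
  refine hFTC.congr_of_eventuallyEq ?_
  filter_upwards [Ioo_mem_nhds hu.1 hu.2] with v hv
  exact classicalRLI_add_one hα hv.1.le (hg.mono_set (Icc_subset_Icc_right hv.2.le))

end ClassicalRLI

section ChangeOfVariable

variable {α β : ℂ} {a b : ℝ} {φ : ℝ → ℝ} {f g : ℝ → ℂ}

/-- An admissible substitution on `[a, b]`: continuous there, with positive derivative inside.
Nothing is required of `φ′` at the endpoints, so that `t ↦ t ^ ρ` on `[0, b]` is included for every
`ρ > 0`. -/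
structure PosDerivOn (φ : ℝ → ℝ) (a b : ℝ) : Prop where
  continuousOn : ContinuousOn φ (Set.Icc a b)
  deriv_pos : ∀ t ∈ Set.Ioo a b, 0 < deriv φ t

lemma IsC1Pos.posDerivOn (hφ : IsC1Pos φ a b) : PosDerivOn φ a b where
  continuousOn t ht := (hφ.deriv_at t ht).continuousAt.continuousWithinAt
  deriv_pos t ht := hφ.deriv_pos t (Ioo_subset_Icc_self ht)

lemma IsC1Pos.integrableOn_deriv_mul (hφ : IsC1Pos φ a b) (hf : IntegrableOn f (Set.Icc a b)) :
    IntegrableOn (fun t => ((deriv φ t : ℝ) : ℂ) * f t) (Set.Icc a b) :=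
  hf.continuousOn_mul (Complex.continuous_ofReal.comp_continuousOn hφ.continuous_deriv)
    isCompact_Icc

namespace PosDerivOn

lemma hasDerivAt (hφ : PosDerivOn φ a b) {t : ℝ} (ht : t ∈ Set.Ioo a b) :
    HasDerivAt φ (deriv φ t) t :=
  (differentiableAt_of_deriv_ne_zero (hφ.deriv_pos t ht).ne').hasDerivAt

lemma strictMonoOn (hφ : PosDerivOn φ a b) : StrictMonoOn φ (Set.Icc a b) :=
  strictMonoOn_of_deriv_pos (convex_Icc a b) hφ.continuousOn fun t ht =>
    hφ.deriv_pos t (interior_Icc (a := a) (b := b) ▸ ht)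

lemma exists_eqOn_comp (hφ : PosDerivOn φ a b) (hab : a ≤ b)
    (hf : IntegrableOn (fun t => ((deriv φ t : ℝ) : ℂ) * f t) (Set.Icc a b)) :
    ∃ g : ℝ → ℂ, EqOn f (g ∘ φ) (Set.Icc a b) ∧ IntegrableOn g (Set.Icc (φ a) (φ b)) := by
  have hfg : EqOn f (f ∘ Function.invFunOn φ (Set.Icc a b) ∘ φ) (Set.Icc a b) := fun t ht =>
    congrArg f (hφ.strictMonoOn.injOn.leftInvOn_invFunOn ht).symm
  refine ⟨f ∘ Function.invFunOn φ (Set.Icc a b), hfg, ?_⟩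
  rw [← integrableOn_Icc_deriv_smul_iff_of_deriv_nonneg hφ.continuousOn
    (fun t ht => hφ.hasDerivAt ht) (fun t ht => (hφ.deriv_pos t ht).le) hab]
  refine hf.congr_fun (fun t ht => ?_) measurableSet_Icc
  rw [Complex.real_smul]
  exact congrArg _ (hfg ht)

lemma eqOn_RLI_classicalRLI_comp (hφ : PosDerivOn φ a b) (hfg : EqOn f (g ∘ φ) (Set.Ioo a b)) :
    EqOn (RLI α a φ f) (classicalRLI α (φ a) g ∘ φ) (Set.Icc a b) := by
  intro x hx
  have hcov : ∫ t in a..x, deriv φ t •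
        ((fun s => ((φ x - s : ℝ) : ℂ) ^ (α - 1) * g s) ∘ φ) t =
      ∫ s in φ a..φ x, ((φ x - s : ℝ) : ℂ) ^ (α - 1) * g s := by
    have hsub : ∀ t ∈ Set.Ioo (min a x) (max a x), t ∈ Set.Ioo a b := by
      rw [min_eq_left hx.1, max_eq_right hx.1]
      exact Ioo_subset_Ioo_right hx.2
    refine intervalIntegral.integral_deriv_smul_comp_of_deriv_nonneg ?_
      (fun t ht => hφ.hasDerivAt (hsub t ht)) (fun t ht => (hφ.deriv_pos t (hsub t ht)).le)
    rw [uIcc_of_le hx.1]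
    exact hφ.continuousOn.mono (Icc_subset_Icc_right hx.2)
  rw [Function.comp_apply, RLI, classicalRLI, ← hcov]
  congr 1
  refine intervalIntegral.integral_congr_Ioo_of_le hx.1 fun t ht => ?_
  simp only [hfg (Ioo_subset_Ioo_right hx.2 ht), Function.comp_apply, Complex.real_smul, mul_assoc]

lemma exists_eqOn_RLI_classicalRLI_comp (hφ : PosDerivOn φ a b) (hab : a ≤ b)
    (hf : IntegrableOn (fun t => ((deriv φ t : ℝ) : ℂ) * f t) (Set.Icc a b)) :
    ∃ g : ℝ → ℂ, IntegrableOn g (Set.Icc (φ a) (φ b)) ∧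
      ∀ γ, EqOn (RLI γ a φ f) (classicalRLI γ (φ a) g ∘ φ) (Set.Icc a b) := by
  obtain ⟨g, hfg, hg⟩ := hφ.exists_eqOn_comp hab hf
  exact ⟨g, hg, fun γ => hφ.eqOn_RLI_classicalRLI_comp (hfg.mono Ioo_subset_Icc_self)⟩

lemma eqOn_RLI_RLI (hφ : PosDerivOn φ a b) (hα : 0 < α.re) (hβ : 0 < β.re)
    (hαβ : 1 ≤ (α + β).re)
    (hf : IntegrableOn (fun t => ((deriv φ t : ℝ) : ℂ) * f t) (Set.Icc a b)) :
    EqOn (RLI β a φ (RLI α a φ f)) (RLI (α + β) a φ f) (Set.Icc a b) := by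
  intro x hx
  have hab : a ≤ b := hx.1.trans hx.2
  obtain ⟨g, hg, hconj⟩ := hφ.exists_eqOn_RLI_classicalRLI_comp hab hf
  obtain ⟨hax, hxb⟩ := hφ.strictMonoOn.monotoneOn.mapsTo_Icc hx
  calc RLI β a φ (RLI α a φ f) x
      = classicalRLI β (φ a) (classicalRLI α (φ a) g) (φ x) :=
        hφ.eqOn_RLI_classicalRLI_comp ((hconj α).mono Ioo_subset_Icc_self) hx
    _ = classicalRLI (α + β) (φ a) g (φ x) :=
        classicalRLI_classicalRLI hα hβ hαβ hax (hg.mono_set (Icc_subset_Icc_right hxb))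
    _ = RLI (α + β) a φ f x := (hconj (α + β) hx).symm

end PosDerivOn

end ChangeOfVariable

section Derivative

variable {α : ℂ} {a b : ℝ} {φ : ℝ → ℝ} {f g : ℝ → ℂ}

lemma RLI_one (a : ℝ) (φ : ℝ → ℝ) (f : ℝ → ℂ) (x : ℝ) :
    RLI 1 a φ f x = ∫ t in a..x, ((deriv φ t : ℝ) : ℂ) * f t := by
  simp [RLI]

lemma eqOn_phiD {U : Set ℝ} (hU : IsOpen U) (hfg : EqOn f g U) :
    EqOn (phiD φ f) (phiD φ g) U := by
  intro x hx
  rw [phiD, phiD, (hfg.eventuallyEq_of_mem (hU.mem_nhds hx)).deriv_eq]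

lemma eqOn_phiD_iterate {U : Set ℝ} (hU : IsOpen U) (hfg : EqOn f g U) (k : ℕ) :
    EqOn ((phiD φ)^[k] f) ((phiD φ)^[k] g) U := by
  induction k with
  | zero => exact hfg
  | succ k ih =>
    rw [Function.iterate_succ_apply', Function.iterate_succ_apply']
    exact eqOn_phiD hU ih

lemma re_lt_rlN (α : ℂ) : α.re < rlN α := by
  rw [rlN, Int.floor_toNat, Nat.cast_succ]
  exact Nat.lt_floor_add_one α.re

namespace PosDerivOn

lemma phiD_comp (hφ : PosDerivOn φ a b) {x : ℝ} (hx : x ∈ Set.Ioo a b) {g' : ℂ}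
    (hg : HasDerivAt g g' (φ x)) : phiD φ (g ∘ φ) x = g' := by
  rw [phiD, (hg.scomp x (hφ.hasDerivAt hx)).deriv, Complex.real_smul, inv_mul_cancel_left₀]
  exact Complex.ofReal_ne_zero.2 (hφ.deriv_pos x hx).ne'

lemma eqOn_phiD_RLI_nat (hφ : PosDerivOn φ a b)
    (hf : IntegrableOn (fun t => ((deriv φ t : ℝ) : ℂ) * f t) (Set.Icc a b)) (k : ℕ) :
    EqOn (phiD φ (RLI (k + 1 + 1) a φ f)) (RLI (k + 1) a φ f) (Set.Ioo a b) := by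
  intro x hx
  obtain ⟨g, hg, hconj⟩ := hφ.exists_eqOn_RLI_classicalRLI_comp (hx.1.trans hx.2).le hf
  rw [eqOn_phiD isOpen_Ioo ((hconj _).mono Ioo_subset_Icc_self) hx,
    hconj _ (Ioo_subset_Icc_self hx)]
  exact hφ.phiD_comp hx (hasDerivAt_classicalRLI_add_one (re_natCast_add_one_pos k) hg
    (continuousOn_classicalRLI_nat_succ hg k) (hφ.strictMonoOn.mapsTo_Ioo hx))

lemma eqOn_phiD_iterate_RLI_nat (hφ : PosDerivOn φ a b)
    (hf : IntegrableOn (fun t => ((deriv φ t : ℝ) : ℂ) * f t) (Set.Icc a b)) (k : ℕ) :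
    EqOn ((phiD φ)^[k] (RLI (k + 1) a φ f)) (RLI 1 a φ f) (Set.Ioo a b) := by
  induction k with
  | zero => simp [EqOn]
  | succ k ih =>
    rw [Function.iterate_succ_apply, Nat.cast_succ]
    exact (eqOn_phiD_iterate isOpen_Ioo (hφ.eqOn_phiD_RLI_nat hf k) k).trans ih

lemma ae_phiD_RLI_one (hφ : PosDerivOn φ a b) (hab : a ≤ b)
    (hf : IntegrableOn (fun t => ((deriv φ t : ℝ) : ℂ) * f t) (Set.Icc a b)) :
    ∀ᵐ x, x ∈ Set.Ioo a b → phiD φ (RLI 1 a φ f) x = f x := by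
  have hf' := (intervalIntegrable_iff_integrableOn_Icc_of_le hab).2 hf
  filter_upwards [hf'.ae_hasDerivAt_integral] with x hderiv hx
  rw [uIcc_of_le hab] at hderiv
  rw [phiD, funext (RLI_one a φ f),
    (hderiv (Ioo_subset_Icc_self hx) a (left_mem_Icc.2 hab)).deriv, inv_mul_cancel_left₀]
  exact Complex.ofReal_ne_zero.2 (hφ.deriv_pos x hx).ne'

lemma eqOn_RLD_RLI (hφ : PosDerivOn φ a b) (hα : 0 < α.re)
    (hf : IntegrableOn (fun t => ((deriv φ t : ℝ) : ℂ) * f t) (Set.Icc a b)) :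
    EqOn (RLD α a φ (RLI α a φ f)) (phiD φ (RLI 1 a φ f)) (Set.Ioo a b) := by
  have hn : α + (rlN α - α) = (⌊α.re⌋.toNat : ℂ) + 1 := by
    rw [add_sub_cancel, rlN, Nat.cast_succ]
  have hsemigroup : EqOn (RLI (rlN α - α) a φ (RLI α a φ f))
      (RLI (⌊α.re⌋.toNat + 1) a φ f) (Set.Ioo a b) := by
    rw [← hn]
    refine (hφ.eqOn_RLI_RLI hα ?_ ?_ hf).mono Ioo_subset_Icc_self
    · simpa using re_lt_rlN α
    · simp [hn]
  rw [RLD, rlN, Function.iterate_succ_apply']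
  exact eqOn_phiD isOpen_Ioo ((eqOn_phiD_iterate isOpen_Ioo hsemigroup _).trans
    (hφ.eqOn_phiD_iterate_RLI_nat hf _))

end PosDerivOn

end Derivative

end FracDE

theorem statement0_general (α : ℂ) (hα : 0 < α.re) (a b : ℝ) (hab : a ≤ b)
    (φ : ℝ → ℝ) (hφ : FracDE.PosDerivOn φ a b) (f : ℝ → ℂ)
    (hf : IntegrableOn (fun t => ((deriv φ t : ℝ) : ℂ) * f t) (Set.Icc a b)) :
    ∀ᵐ x, x ∈ Set.Icc a b → FracDE.RLD α a φ (FracDE.RLI α a φ f) x = f x := by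
  filter_upwards [hφ.ae_phiD_RLI_one hab hf, Measure.ae_ne volume a, Measure.ae_ne volume b]
    with x hx hxa hxb hxab
  have hxI : x ∈ Set.Ioo a b := ⟨hxab.1.lt_of_ne' hxa, hxab.2.lt_of_ne hxb⟩
  exact (hφ.eqOn_RLD_RLI hα hf hxI).trans (hx hxI)

/-- For `α ∈ ℂ` with `Re α > 0`, `a < b`, `φ ∈ C¹[a,b]` with `φ′ > 0`,
and `f ∈ L¹(a,b)`, one has `D_{a+}^{α,φ} I_{a+}^{α,φ} f = f` a.e. on `[a,b]`. -/
theorem statement0 (α : ℂ) (hα : 0 < α.re) (a b : ℝ) (hab : a < b)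
    (φ : ℝ → ℝ) (hφ : FracDE.IsC1Pos φ a b)
    (f : ℝ → ℂ) (hf : MeasureTheory.IntegrableOn f (Set.Icc a b)) :
    ∀ᵐ x ∂(volume : Measure ℝ), x ∈ Set.Icc a b →
      FracDE.RLD α a φ (FracDE.RLI α a φ f) x = f x :=
  statement0_general α hα a b hab.le φ hφ.posDerivOn f (hφ.integrableOn_deriv_mul hf)
end
end

section
/- Let α ∈ ℂ with Re(α) > 0, let φ ∈ C¹[0,b] with φ′ > 0 on [0,b], and let f be continuous on [0,b]. Then the function x ↦ (I_{0+}^{α,φ} f)(x) is continuous on [0,b]. -/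
open MeasureTheory Filter Set Finset Topology

noncomputable section

/-!
If `f = g ∘ φ`, then the substitution `u = φ t` turns `I_{a+}^{α,φ} f` into the classical fractional
integral of `g` evaluated at `φ x`. A strictly monotone continuous `φ` embeds the compact interval
into `ℝ`, so such a `g` exists and, by Tietze, can be chosen continuous on all of `ℝ`. The classical
integral is a convolution with the locally integrable kernel `u ^ (α - 1)`; moving the translation
onto `g` leaves this kernel fixed, and dominated convergence applies.
-/

namespace FracDE

universe u v in
theorem exists_continuousMap_eqOn_comp_of_injOn {X : Type*} {Y : Type u} {Z : Type v}
    [TopologicalSpace X] [TopologicalSpace Y] [T2Space Y] [NormalSpace Y] [TopologicalSpace Z]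
    [TietzeExtension.{u, v} Z] {K : Set X} (hK : IsCompact K) {φ : X → Y} (hφ : ContinuousOn φ K)
    (hinj : InjOn φ K) {f : X → Z} (hf : ContinuousOn f K) :
    ∃ g : C(Y, Z), EqOn f (g ∘ φ) K := by
  have : CompactSpace K := isCompact_iff_compactSpace.1 hK
  have hemb : IsClosedEmbedding (K.domRestrict φ) :=
    hφ.domRestrict.isClosedEmbedding hinj.injective
  obtain ⟨g, hg⟩ :=
    ContinuousMap.exists_extension' hemb ⟨K.domRestrict f, hf.domRestrict⟩
  exact ⟨g, fun x hx => (congrFun hg ⟨x, hx⟩).symm⟩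

theorem continuous_parametric_primitive_smul {X 𝕜 E : Type*} [TopologicalSpace X]
    [FirstCountableTopology X] [WeaklyLocallyCompactSpace X] [NormedField 𝕜]
    [NormedAddCommGroup E] [NormedSpace 𝕜 E] [NormedSpace ℝ E]
    {μ : Measure ℝ} [NullSingletonClass μ] {k : ℝ → 𝕜} (hk : LocallyIntegrable k μ)
    {F : X → ℝ → E} (hF : Continuous F.uncurry) (c : ℝ) :
    Continuous fun p : X × ℝ => ∫ u in c..p.2, k u • F p.1 u ∂μ := by
  refine continuous_iff_continuousAt.2 fun ⟨x₀, y₀⟩ => ?_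
  obtain ⟨A, hA⟩ := exists_lt (min c y₀)
  obtain ⟨B, hB⟩ := exists_gt (max c y₀)
  obtain ⟨hAc, hAy⟩ := lt_min_iff.1 hA
  obtain ⟨hcB, hyB⟩ := max_lt_iff.1 hB
  obtain ⟨N, hN, hNx₀⟩ := exists_compact_mem_nhds x₀
  obtain ⟨M, hM⟩ := (hN.prod isCompact_uIcc).exists_bound_of_continuousOn
    (s := N ×ˢ Set.uIcc A B) hF.continuousOn
  have hk_int : IntervalIntegrable k μ A B :=
    (hk.integrableOn_isCompact isCompact_uIcc).intervalIntegrable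
  refine intervalIntegral.continuousAt_parametric_primitive_of_dominated
    (F := fun x u => k u • F x u) (fun u => ‖k u‖ * M) A B (fun x => ?_) ?_
    (hk_int.norm.mul_const M) (.of_forall fun u => ?_) ⟨hAc, hcB⟩ ⟨hAy, hyB⟩ (measure_singleton y₀)
  · exact (hk.aestronglyMeasurable.smul (hF.uncurry_left x).aestronglyMeasurable).restrict
  · filter_upwards [hNx₀] with x hx
    filter_upwards [ae_restrict_mem measurableSet_uIoc] with u hu
    rw [norm_smul]
    gcongr
    exact hM (x, u) ⟨hx, Set.uIoc_subset_uIcc hu⟩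
  · exact (hF.uncurry_right u).continuousAt.const_smul (k u)

variable {α : ℂ} {a b x : ℝ} {φ : ℝ → ℝ} {f g : ℝ → ℂ}

theorem RLI_congr (hfg : EqOn f g (Set.uIcc a x)) : RLI α a φ f x = RLI α a φ g x :=
  congrArg _ (intervalIntegral.integral_congr fun t ht => by simp only [hfg ht])

theorem RLI_comp_eq_RLI_id (hφ : MonotoneOn φ (Set.uIcc a x))
    (hcont : ContinuousOn φ (Set.uIcc a x)) (hdiff : DifferentiableOn ℝ φ (Set.uIoo a x)) :
    RLI α a φ (g ∘ φ) x = RLI α (φ a) id g (φ x) := by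
  have hderiv : ∀ t ∈ Set.uIoo a x, HasDerivAt φ (deriv φ t) t := fun t ht =>
    (hdiff.differentiableAt (Ioo_mem_nhds ht.1 ht.2)).hasDerivAt
  have hnonneg : ∀ t ∈ Set.uIoo a x, 0 ≤ deriv φ t := fun t ht => by
    rw [← derivWithin_of_mem_nhds (Icc_mem_nhds ht.1 ht.2)]
    exact hφ.derivWithin_nonneg
  have hsubst := intervalIntegral.integral_deriv_smul_comp_of_deriv_nonneg
    (g := fun u => ((φ x - u : ℝ) : ℂ) ^ (α - 1) * g u) hcont hderiv hnonneg
  simpa [RLI, mul_assoc] using congrArg ((Complex.Gamma α)⁻¹ * ·) hsubst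

theorem RLI_id_eq_integral_comp_sub (α : ℂ) (a : ℝ) (g : ℝ → ℂ) (x : ℝ) :
    RLI α a id g x =
      (Complex.Gamma α)⁻¹ * ∫ u in (0 : ℝ)..x - a, (u : ℂ) ^ (α - 1) • g (x - u) := by
  have h := intervalIntegral.integral_comp_sub_left (a := a) (b := x)
    (fun u : ℝ => (u : ℂ) ^ (α - 1) • g (x - u)) x
  simp only [sub_self, sub_sub_cancel] at h
  rw [← h]
  simp only [RLI, deriv_id, id_eq, Complex.ofReal_one, one_mul, smul_eq_mul]

theorem locallyIntegrable_ofReal_cpow {r : ℂ} (hr : -1 < r.re) :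
    LocallyIntegrable fun u : ℝ => (u : ℂ) ^ r := fun x =>
  ⟨Set.Icc (x - 1) (x + 1), Icc_mem_nhds (sub_one_lt x) (lt_add_one x),
    (intervalIntegrable_iff_integrableOn_Icc_of_le (by linarith)).1
      (intervalIntegral.intervalIntegrable_cpow' hr)⟩

theorem continuous_RLI_id (hα : 0 < α.re) (hg : Continuous g) (a : ℝ) :
    Continuous (RLI α a id g) := by
  have hk : LocallyIntegrable fun u : ℝ => (u : ℂ) ^ (α - 1) :=
    locallyIntegrable_ofReal_cpow (by simpa using hα)
  simp only [funext (RLI_id_eq_integral_comp_sub α a g)]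
  have hprim : Continuous fun p : ℝ × ℝ => ∫ u in (0 : ℝ)..p.2, (u : ℂ) ^ (α - 1) • g (p.1 - u) :=
    continuous_parametric_primitive_smul (F := fun x u => g (x - u)) hk (hg.comp continuous_sub) 0
  exact continuous_const.mul (hprim.comp (continuous_id.prodMk (continuous_sub_right a)))

theorem IsC1Pos.differentiableOn (hφ : IsC1Pos φ a b) : DifferentiableOn ℝ φ (Set.Icc a b) :=
  fun t ht => (hφ.deriv_at t ht).differentiableAt.differentiableWithinAt

theorem IsC1Pos.strictMonoOn (hφ : IsC1Pos φ a b) : StrictMonoOn φ (Set.Icc a b) :=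
  strictMonoOn_of_deriv_pos (convex_Icc a b) hφ.differentiableOn.continuousOn fun t ht =>
    hφ.deriv_pos t (interior_subset ht)

end FracDE

theorem statement4_general {α : ℂ} (hα : 0 < α.re) {a b : ℝ} {φ : ℝ → ℝ}
    (hφ : StrictMonoOn φ (Set.Icc a b)) (hcont : ContinuousOn φ (Set.Icc a b))
    (hdiff : DifferentiableOn ℝ φ (Set.Ioo a b)) {f : ℝ → ℂ} (hf : ContinuousOn f (Set.Icc a b)) :
    ContinuousOn (FracDE.RLI α a φ f) (Set.Icc a b) := by
  obtain ⟨g, hfg⟩ :=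
    FracDE.exists_continuousMap_eqOn_comp_of_injOn isCompact_Icc hcont hφ.injOn hf
  have hRLI : EqOn (FracDE.RLI α a φ f) (FracDE.RLI α (φ a) id g ∘ φ) (Set.Icc a b) := by
    intro x hx
    have ha : a ∈ Set.Icc a b := Set.left_mem_Icc.2 (hx.1.trans hx.2)
    have hsub : Set.uIcc a x ⊆ Set.Icc a b := Set.uIcc_subset_Icc ha hx
    calc FracDE.RLI α a φ f x
        = FracDE.RLI α a φ (g ∘ φ) x := FracDE.RLI_congr (hfg.mono hsub)
      _ = FracDE.RLI α (φ a) id g (φ x) :=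
          FracDE.RLI_comp_eq_RLI_id (hφ.monotoneOn.mono hsub) (hcont.mono hsub)
            (hdiff.mono (uIoo_subset_Ioo ha hx))
  exact ((FracDE.continuous_RLI_id hα g.continuous (φ a)).comp_continuousOn hcont).congr hRLI

/-- If `f` is continuous on `[0,b]` then `I_{0+}^{α,φ} f` is continuous on `[0,b]`. -/
theorem statement4 (α : ℂ) (hα : 0 < α.re) (b : ℝ) (hb : 0 < b)
    (φ : ℝ → ℝ) (hφ : FracDE.IsC1Pos φ 0 b)
    (f : ℝ → ℂ) (hf : ContinuousOn f (Set.Icc 0 b)) :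
    ContinuousOn (FracDE.RLI α 0 φ f) (Set.Icc 0 b) :=
  statement4_general hα hφ.strictMonoOn hφ.differentiableOn.continuousOn
    (hφ.differentiableOn.mono Set.Ioo_subset_Icc_self) hf
end
end
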